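/- arXiv:2510.23333 — 2 statements merged into one kernel-verified Lean document; each statement's English description precedes it below -/
import Mathlib

section
/- Let D > 0 with D ≡ 0, 1, or 4 (mod 8), and let e be an integer with e² < D and e² ≡ D (mod 8). The set P_{D,e} of triples (a,b,d) of integers satisfying a > 0, d > 0, 0 ≤ b < a, a·d = (D - e²)/8, and gcd(a,b,d,e) = 1 is finite, and its cardinality equals ∑_{r | f, gcd(r,e)=1} c((D-e²)/(8r²)), where (D-e²)/8 = f²·q with q squarefree, and c(m) = m·∏_{p prime, p | m} (1 + 1/p). -/
/-- `cIdx m = m·∏_{p prime, p ∣ m} (1 + 1/p)`, the index of `Γ₀(m)` in `SL(2,ℤ)`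
(with `cIdx 1 = 1`). -/
def cIdx (m : ℕ) : ℚ := m * ∏ p ∈ m.primeFactors, (1 + 1 / (p : ℚ))

lemma cIdx_mul {a b : ℕ} (h : Nat.Coprime a b) : cIdx (a * b) = cIdx a * cIdx b := by
  unfold cIdx
  rw [h.primeFactors_mul, Finset.prod_union h.disjoint_primeFactors]
  push_cast; ring

def hh (g : ℕ) : ℚ := ∏ p ∈ g.primeFactors, (1 - (p : ℚ)⁻¹)

lemma hh_mul {a b : ℕ} (h : Nat.Coprime a b) : hh (a * b) = hh a * hh b := by
  unfold hh
  rw [h.primeFactors_mul, Finset.prod_union h.disjoint_primeFactors]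

def WW (m : ℕ) : ℚ := ∑ a ∈ m.divisors, (a : ℚ) * hh (Nat.gcd a (m / a))

lemma WW_mul {m n : ℕ} (h : Nat.Coprime m n) : WW (m * n) = WW m * WW n := by
  unfold WW
  rw [Nat.divisors_mul, Finset.mul_def, Finset.sum_image, Finset.sum_mul_sum, ← Finset.sum_product']
  · apply Finset.sum_congr rfl
    rintro ⟨a, b⟩ hab
    simp only [Finset.mem_product, Nat.mem_divisors] at hab
    obtain ⟨⟨⟨a', rfl⟩, h1⟩, ⟨b', rfl⟩, h2⟩ := hab
    have ha : 0 < a := Nat.pos_of_ne_zero (by rintro rfl; simp at h1)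
    have hb : 0 < b := Nat.pos_of_ne_zero (by rintro rfl; simp at h2)
    have e1 : a * a' * (b * b') / (a * b) = a' * b' := by
      rw [show a * a' * (b * b') = (a * b) * (a' * b') by ring]
      exact Nat.mul_div_cancel_left _ (by positivity)
    simp only [e1, Nat.mul_div_cancel_left _ ha, Nat.mul_div_cancel_left _ hb]
    have hab : Nat.Coprime a b := Nat.Coprime.coprime_mul_right (Nat.Coprime.coprime_mul_right_right h)
    have hab' : Nat.Coprime a b' := Nat.Coprime.coprime_mul_right (Nat.Coprime.coprime_mul_left_right h)
    have ha'b : Nat.Coprime a' b := Nat.Coprime.coprime_mul_left (Nat.Coprime.coprime_mul_right_right h)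
    have ha'b' : Nat.Coprime a' b' := Nat.Coprime.coprime_mul_left (Nat.Coprime.coprime_mul_left_right h)
    have e2 : Nat.gcd (a * b) (a' * b') = Nat.gcd a a' * Nat.gcd b b' := by
      rw [Nat.Coprime.gcd_mul _ ha'b', Nat.Coprime.gcd_mul_right_cancel _ ha'b.symm,
        Nat.Coprime.gcd_mul_left_cancel _ hab']
    have e3 : Nat.Coprime (Nat.gcd a a') (Nat.gcd b b') :=
      (hab.coprime_dvd_left (Nat.gcd_dvd_left _ _)).coprime_dvd_right (Nat.gcd_dvd_left _ _)
    rw [e2, hh_mul e3]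
    push_cast; ring
  · simpa using h.mul_injOn_divisors

lemma WW_pp (p k : ℕ) (hp : p.Prime) (hk : 0 < k) : WW (p ^ k) = cIdx (p ^ k) := by
  obtain ⟨j, rfl⟩ : ∃ j, k = j + 1 := ⟨k - 1, by omega⟩
  unfold WW
  have hp0 : (p : ℚ) ≠ 0 := by exact_mod_cast hp.ne_zero
  have hc : cIdx (p ^ (j+1)) = p ^ (j+1) + p ^ j := by
    unfold cIdx
    rw [Nat.primeFactors_prime_pow (by omega) hp]
    simp; field_simp
    ring
  rw [hc, Nat.sum_divisors_prime_pow hp, Finset.sum_range_succ, Finset.sum_range_succ']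
  have key : ∀ i ∈ Finset.range j, ((p ^ (i+1) : ℕ) : ℚ) * hh (Nat.gcd (p ^ (i+1)) (p ^ (j+1) / p ^ (i+1)))
      = (p:ℚ) ^ (i+1) - p ^ i := by
    intro i hi
    rw [Finset.mem_range] at hi
    rw [Nat.pow_div (by omega) hp.pos]
    have : Nat.gcd (p ^ (i+1)) (p ^ (j + 1 - (i+1))) = p ^ (min (i+1) (j+1-(i+1))) := by
      rcases le_total (i+1) (j+1-(i+1)) with h | h
      · rw [min_eq_left h, Nat.gcd_eq_left (pow_dvd_pow _ h)]
      · rw [min_eq_right h, Nat.gcd_eq_right (pow_dvd_pow _ h)]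
    rw [this, hh, Nat.primeFactors_prime_pow (by omega) hp]
    simp; field_simp
    ring
  rw [Finset.sum_congr rfl key, Finset.sum_range_sub (fun i => (p:ℚ)^i)]
  rw [Nat.div_self (pow_pos hp.pos _)]
  simp [hh]; ring

lemma WW_eq (m : ℕ) (hm : 0 < m) : WW m = cIdx m := by
  induction m using Nat.recOnPosPrimePosCoprime with
  | zero => simp at hm
  | one => simp [WW, cIdx, hh]
  | prime_pow p n hp hn => exact WW_pp p n hp hn
  | coprime a b ha hb hab iha ihb =>
    rw [WW_mul hab, cIdx_mul hab, iha (by omega), ihb (by omega)]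

lemma card_blocks (g k : ℕ) : ((Finset.range (g * k)).filter (fun b => Nat.Coprime g b)).card = k * g.totient := by
  induction k with
  | zero => simp
  | succ k ih =>
    have h := Nat.filter_coprime_Ico_eq_totient g (g*k)
    have : Finset.range (g * (k+1)) = Finset.range (g*k) ∪ Finset.Ico (g*k) (g*k+g) := by
      ext x; simp [mul_add]; omega
    rw [this, Finset.filter_union, Finset.card_union_of_disjoint, ih, h]
    · ring
    · apply Finset.disjoint_filter_filter
      rw [Finset.disjoint_left]; intro x; simp; omega

lemma r_dvd (r f q : ℕ) (hf : 0 < f) (hq : Squarefree q) (h : r ^ 2 ∣ f ^ 2 * q) : r ∣ f := by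
  obtain ⟨g, r', f', hg, hc, rfl, rfl⟩ := Nat.exists_coprime' (m := r) (n := f) (Nat.gcd_pos_of_pos_right _ hf)
  have h1 : r' ^ 2 ∣ f' ^ 2 * q := by
    have : g ^ 2 * r' ^ 2 ∣ g ^ 2 * (f' ^ 2 * q) := by convert h using 1 <;> ring
    exact Nat.dvd_of_mul_dvd_mul_left (by positivity) this
  have h2 : r' ^ 2 ∣ q := (Nat.Coprime.pow 2 2 hc).dvd_of_dvd_mul_left h1
  have h3 := hq r' (by rwa [← sq])
  rw [Nat.isUnit_iff] at h3
  subst h3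
  simp

def UU (n : ℕ) : Finset (ℕ × ℕ × ℕ) :=
  ((Finset.range (n+1)) ×ˢ (Finset.range (n+1)) ×ˢ (Finset.range (n+1))).filter
    (fun t => t.2.1 < t.1 ∧ t.1 * t.2.2 = n)

lemma mem_UU {n : ℕ} (hn : 0 < n) (t : ℕ × ℕ × ℕ) : t ∈ UU n ↔ t.2.1 < t.1 ∧ t.1 * t.2.2 = n := by
  obtain ⟨a, b, d⟩ := t
  simp only [UU, Finset.mem_filter, Finset.mem_product, Finset.mem_range]
  constructor
  · exact fun h => h.2
  · rintro ⟨h1, h2⟩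
    have : a ≤ n := Nat.le_of_dvd hn ⟨d, h2.symm⟩
    have : d ≤ n := Nat.le_of_dvd hn ⟨a, by rw [← h2, mul_comm]⟩
    refine ⟨⟨?_, ?_, ?_⟩, h1, h2⟩ <;> omega

def gg (t : ℕ × ℕ × ℕ) : ℕ := Nat.gcd (Nat.gcd t.1 t.2.2) t.2.1

lemma card_prim (m : ℕ) (hm : 0 < m) : (((UU m).filter (fun t => gg t = 1)).card : ℚ) = cIdx m := by
  rw [← WW_eq m hm, WW]
  rw [Finset.card_eq_sum_card_fiberwise (f := fun t => t.1) (t := m.divisors)]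
  · push_cast
    apply Finset.sum_congr rfl
    intro a ha
    obtain ⟨⟨d, rfl⟩, h0⟩ := Nat.mem_divisors.1 ha
    have ha0 : 0 < a := Nat.pos_of_ne_zero (by rintro rfl; simp at h0)
    rw [Nat.mul_div_cancel_left _ ha0]
    obtain ⟨k, hk⟩ := Nat.gcd_dvd_left a d
    have hg : 0 < Nat.gcd a d := Nat.gcd_pos_of_pos_left _ ha0
    have : ((UU (a*d)).filter (fun t => gg t = 1)).filter (fun t => t.1 = a) =
      ((Finset.range (Nat.gcd a d * k)).filter (fun b => Nat.Coprime (Nat.gcd a d) b)).image (fun b => (a, b, d)) := by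
      ext ⟨x, y, z⟩
      rw [← hk]
      simp only [Finset.mem_filter, mem_UU hm, Finset.mem_image, Finset.mem_range, Prod.mk.injEq]
      constructor
      · rintro ⟨⟨⟨h1, h2⟩, h3⟩, rfl⟩
        have := Nat.eq_of_mul_eq_mul_left ha0 h2
        subst this
        exact ⟨y, ⟨h1, h3⟩, rfl, rfl, rfl⟩
      · rintro ⟨b, ⟨h1, h2⟩, rfl, rfl, rfl⟩
        exact ⟨⟨⟨h1, rfl⟩, h2⟩, rfl⟩
    rw [this, Finset.card_image_of_injective _ (by intro x y; simp), card_blocks]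
    push_cast
    rw [Nat.totient_eq_mul_prod_factors]
    have : (a : ℚ) = (Nat.gcd a d : ℕ) * k := by exact_mod_cast hk
    rw [hh]
    conv_rhs => rw [this]
    ring
  · rintro ⟨a, b, d⟩ ht
    simp only [Finset.coe_filter, Set.mem_ofPred_eq, mem_UU hm] at ht
    simp only [Finset.mem_coe, Nat.mem_divisors]
    exact ⟨⟨d, ht.1.2.symm⟩, hm.ne'⟩

lemma card_main (n f q E : ℕ) (hn : 0 < n) (hfq : n = f ^ 2 * q) (hq : Squarefree q) :
    (((UU n).filter (fun t => Nat.Coprime (gg t) E)).card : ℚ)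
      = ∑ r ∈ f.divisors.filter (fun r => Nat.Coprime r E), cIdx (n / r ^ 2) := by
  have hf : 0 < f := Nat.pos_of_ne_zero (by rintro rfl; simp at hfq; omega)
  rw [Finset.card_eq_sum_card_fiberwise (f := gg) (t := f.divisors.filter (fun r => Nat.Coprime r E))]
  · push_cast
    apply Finset.sum_congr rfl
    intro r hr
    simp only [Finset.mem_filter, Nat.mem_divisors] at hr
    have hr0 : 0 < r := Nat.pos_of_dvd_of_pos hr.1.1 hf
    obtain ⟨m, hm⟩ : r ^ 2 ∣ n := hfq ▸ (pow_dvd_pow_of_dvd hr.1.1 2).mul_right q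
    have hm0 : 0 < m := Nat.pos_of_ne_zero (by rintro rfl; simp at hm; omega)
    have hd : n / r ^ 2 = m := by rw [hm]; exact Nat.mul_div_cancel_left _ (by positivity)
    rw [hd, ← card_prim m hm0]
    have : ((UU n).filter (fun t => Nat.Coprime (gg t) E)).filter (fun t => gg t = r) =
      ((UU m).filter (fun t => gg t = 1)).image (fun t => (r * t.1, r * t.2.1, r * t.2.2)) := by
      ext ⟨x, y, z⟩
      simp only [Finset.mem_filter, mem_UU hm0, mem_UU hn, Finset.mem_image, Prod.exists, Prod.mk.injEq]
      have hgg : ∀ a b d, gg (r * a, r * b, r * d) = r * gg (a, b, d) := by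
        intro a b d; simp [gg, Nat.gcd_mul_left]
      constructor
      · rintro ⟨⟨⟨h1, h2⟩, h3⟩, h4⟩
        have hxz : r ∣ Nat.gcd x z := h4 ▸ Nat.gcd_dvd_left _ _
        obtain ⟨a, rfl⟩ := hxz.trans (Nat.gcd_dvd_left x z)
        obtain ⟨d, rfl⟩ := hxz.trans (Nat.gcd_dvd_right _ z)
        obtain ⟨b, rfl⟩ : r ∣ y := h4 ▸ Nat.gcd_dvd_right _ _
        refine ⟨a, b, d, ⟨⟨Nat.lt_of_mul_lt_mul_left h1, ?_⟩, ?_⟩, rfl, rfl, rfl⟩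
        · apply Nat.eq_of_mul_eq_mul_left (show 0 < r ^ 2 by positivity)
          rw [← hm, ← h2]; ring
        · rw [hgg] at h4
          exact Nat.eq_of_mul_eq_mul_left hr0 (by omega)
      · rintro ⟨a, b, d, ⟨⟨h1, h2⟩, h3⟩, rfl, rfl, rfl⟩
        rw [hgg, h3, mul_one]
        refine ⟨⟨⟨Nat.mul_lt_mul_of_pos_left h1 hr0, ?_⟩, hr.2⟩, rfl⟩
        rw [hm, ← h2]; ring
    rw [this, Finset.card_image_of_injective]
    rintro ⟨a, b, d⟩ ⟨a', b', d'⟩ h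
    simpa [hr0.ne'] using h
  · rintro ⟨a, b, d⟩ ht
    simp only [Finset.coe_filter, Set.mem_ofPred_eq, mem_UU hn] at ht
    simp only [Finset.coe_filter, Set.mem_ofPred_eq, Nat.mem_divisors]
    refine ⟨⟨r_dvd _ f q hf hq ?_, hf.ne'⟩, ht.2⟩
    rw [← hfq, ← ht.1.2, sq]
    have : gg (a, b, d) ∣ Nat.gcd a d := Nat.gcd_dvd_left _ _
    exact mul_dvd_mul (this.trans (Nat.gcd_dvd_left _ _)) (this.trans (Nat.gcd_dvd_right _ _))

theorem prototype_count (D e : ℤ) (hD : 0 < D)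
    (hmod : D % 8 = 0 ∨ D % 8 = 1 ∨ D % 8 = 4)
    (he : e ^ 2 < D) (hcong : e ^ 2 % 8 = D % 8)
    (n f q : ℕ) (hn : (n : ℤ) = (D - e ^ 2) / 8) (hfq : n = f ^ 2 * q) (hq : Squarefree q) :
    {p : ℤ × ℤ × ℤ | 0 < p.1 ∧ 0 < p.2.2 ∧ 0 ≤ p.2.1 ∧ p.2.1 < p.1 ∧
        p.1 * p.2.2 = (D - e ^ 2) / 8 ∧
        Int.gcd p.1 (Int.gcd p.2.1 (Int.gcd p.2.2 e)) = 1}.Finite ∧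
      (({p : ℤ × ℤ × ℤ | 0 < p.1 ∧ 0 < p.2.2 ∧ 0 ≤ p.2.1 ∧ p.2.1 < p.1 ∧
          p.1 * p.2.2 = (D - e ^ 2) / 8 ∧
          Int.gcd p.1 (Int.gcd p.2.1 (Int.gcd p.2.2 e)) = 1}.ncard : ℚ)
        = ∑ r ∈ f.divisors.filter (fun r => Nat.Coprime r e.natAbs),
            cIdx (n / r ^ 2)) := by
  have hn0 : 0 < n := by omega
  rw [← card_main n f q e.natAbs hn0 hfq hq, ← hn]
  have key : {p : ℤ × ℤ × ℤ | 0 < p.1 ∧ 0 < p.2.2 ∧ 0 ≤ p.2.1 ∧ p.2.1 < p.1 ∧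
        p.1 * p.2.2 = (n : ℤ) ∧
        Int.gcd p.1 (Int.gcd p.2.1 (Int.gcd p.2.2 e)) = 1} =
      ((((UU n).filter (fun t => Nat.Coprime (gg t) e.natAbs)).image
        (fun t => ((t.1 : ℤ), (t.2.1 : ℤ), (t.2.2 : ℤ))) : Finset (ℤ × ℤ × ℤ)) : Set (ℤ × ℤ × ℤ)) := by
    have hgcd : ∀ a b d : ℕ, Int.gcd (a:ℤ) (Int.gcd (b:ℤ) (Int.gcd (d:ℤ) e)) =
        Nat.gcd (gg (a, b, d)) e.natAbs := by
      intro a b d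
      simp only [Int.gcd, Int.natAbs_natCast, gg]
      rw [Nat.gcd_assoc, Nat.gcd_assoc, Nat.gcd_left_comm d b]
    ext ⟨x, y, z⟩
    simp only [Set.mem_ofPred_eq, Finset.coe_image, Finset.coe_filter, mem_UU hn0, Set.mem_image, Prod.exists, Prod.mk.injEq]
    constructor
    · rintro ⟨h1, h2, h3, h4, h5, h6⟩
      lift x to ℕ using h1.le
      lift y to ℕ using h3
      lift z to ℕ using h2.le
      rw [hgcd] at h6
      exact ⟨x, y, z, ⟨⟨by exact_mod_cast h4, by exact_mod_cast h5⟩, h6⟩, rfl, rfl, rfl⟩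
    · rintro ⟨a, b, d, ⟨⟨h1, h2⟩, h3⟩, rfl, rfl, rfl⟩
      rw [hgcd]
      have : 0 < d := Nat.pos_of_ne_zero (by rintro rfl; simp at h2; omega)
      refine ⟨by omega, by omega, by omega, by omega, by exact_mod_cast h2, h3⟩
  rw [key]
  refine ⟨Finset.finite_toSet _, ?_⟩
  rw [Set.ncard_coe_finset, Finset.card_image_of_injective]
  rintro ⟨a, b, d⟩ ⟨a', b', d'⟩ h
  simpa using h
end

section
/- Let D be a positive non-square integer with D ≡ 1 (mod 8). Then S_D := ∑_{0 < e < √D, e odd} (-1)^((e-1)/2) · e · m_D(e) = 0, where m_D(e) is the number of integer triples (a,b,d) with a > 0, d > 0, 0 ≤ b < a, ad = (D - e²)/8, and gcd(a,b,d,e) = 1. -/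
/-- `mD D e` is the number of integer triples `(a,b,d)` with `a > 0`, `d > 0`,
`0 ≤ b < a`, `ad = (D - e²)/8` and `gcd(a,b,d,e) = 1`. -/
noncomputable def mD (D : ℕ) (e : ℕ) : ℕ :=
  {p : ℤ × ℤ × ℤ | 0 < p.1 ∧ 0 < p.2.2 ∧ 0 ≤ p.2.1 ∧ p.2.1 < p.1 ∧
    p.1 * p.2.2 = ((D : ℤ) - (e : ℤ) ^ 2) / 8 ∧
    Int.gcd p.1 (Int.gcd p.2.1 (Int.gcd p.2.2 (e : ℤ))) = 1}.ncard

namespace SDproof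

/-- Integer triples `(a, e, d)`. -/
abbrev Tr := ℤ × ℤ × ℤ

/-- A translation. -/
def T : Tr ≃ Tr where
  toFun x := (x.1, x.2.1 + 4 * x.1, x.2.2 - x.2.1 - 2 * x.1)
  invFun x := (x.1, x.2.1 - 4 * x.1, x.2.2 + x.2.1 - 2 * x.1)
  left_inv x := by ext <;> simp <;> ring
  right_inv x := by ext <;> simp <;> ring

/-- The other translation. -/
def U : Tr ≃ Tr where
  toFun x := (x.1 + x.2.1 - 2 * x.2.2, x.2.1 - 4 * x.2.2, x.2.2)
  invFun x := (x.1 - x.2.1 - 2 * x.2.2, x.2.1 + 4 * x.2.2, x.2.2)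
  left_inv x := by ext <;> simp <;> ring
  right_inv x := by ext <;> simp <;> ring

/-- The elliptic element. -/
def R : Tr ≃ Tr where
  toFun x := (x.1 + x.2.1 - 2 * x.2.2, -4 * x.1 - 3 * x.2.1 + 4 * x.2.2, x.2.2 - x.2.1 - 2 * x.1)
  invFun x := (x.1 + x.2.1 - 2 * x.2.2, -4 * x.1 - 3 * x.2.1 + 4 * x.2.2, x.2.2 - x.2.1 - 2 * x.1)
  left_inv x := by ext <;> simp <;> ring
  right_inv x := by ext <;> simp <;> ring

/-- Swap. -/
def W : Tr ≃ Tr where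
  toFun x := (x.2.2, x.2.1, x.1)
  invFun x := (x.2.2, x.2.1, x.1)
  left_inv x := by ext <;> simp
  right_inv x := by ext <;> simp

/-- Flip of the middle coordinate. -/
def L : Tr ≃ Tr where
  toFun x := (x.1, -x.2.1, x.2.2)
  invFun x := (x.1, -x.2.1, x.2.2)
  left_inv x := by ext <;> simp
  right_inv x := by ext <;> simp

/-- Negation. -/
def N : Tr ≃ Tr where
  toFun x := (-x.1, -x.2.1, -x.2.2)
  invFun x := (-x.1, -x.2.1, -x.2.2)
  left_inv x := by ext <;> simp
  right_inv x := by ext <;> simp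

/-- The gcd. -/
def g (x : Tr) : ℕ := Int.gcd x.1 (Int.gcd x.2.2 x.2.1)

lemma dvd_g (k : ℕ) (x : Tr) : k ∣ g x ↔ (k : ℤ) ∣ x.1 ∧ (k : ℤ) ∣ x.2.1 ∧ (k : ℤ) ∣ x.2.2 := by
  unfold g
  rw [Int.dvd_gcd_iff, Int.natCast_dvd_natCast, Int.dvd_gcd_iff]
  tauto

lemma g_dvd (x : Tr) : (g x : ℤ) ∣ x.1 ∧ (g x : ℤ) ∣ x.2.1 ∧ (g x : ℤ) ∣ x.2.2 :=
  (dvd_g _ x).1 dvd_rfl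

lemma dvd_lin {k a b c : ℤ} (ha : k ∣ a) (hb : k ∣ b) (hc : k ∣ c) (u v w : ℤ) :
    k ∣ u * a + v * b + w * c :=
  ((ha.mul_left u).add (hb.mul_left v)).add (hc.mul_left w)

lemma g_eq {x y : Tr}
    (h1 : ∃ u v w, y.1 = u * x.1 + v * x.2.1 + w * x.2.2)
    (h2 : ∃ u v w, y.2.1 = u * x.1 + v * x.2.1 + w * x.2.2)
    (h3 : ∃ u v w, y.2.2 = u * x.1 + v * x.2.1 + w * x.2.2)
    (h4 : ∃ u v w, x.1 = u * y.1 + v * y.2.1 + w * y.2.2)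
    (h5 : ∃ u v w, x.2.1 = u * y.1 + v * y.2.1 + w * y.2.2)
    (h6 : ∃ u v w, x.2.2 = u * y.1 + v * y.2.1 + w * y.2.2) : g y = g x := by
  obtain ⟨a1, a2, a3⟩ := g_dvd x
  obtain ⟨b1, b2, b3⟩ := g_dvd y
  obtain ⟨u1, v1, w1, h1⟩ := h1
  obtain ⟨u2, v2, w2, h2⟩ := h2
  obtain ⟨u3, v3, w3, h3⟩ := h3
  obtain ⟨u4, v4, w4, h4⟩ := h4
  obtain ⟨u5, v5, w5, h5⟩ := h5
  obtain ⟨u6, v6, w6, h6⟩ := h6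
  apply Nat.dvd_antisymm
  · rw [dvd_g]
    refine ⟨?_, ?_, ?_⟩
    · rw [h4]; exact dvd_lin b1 b2 b3 _ _ _
    · rw [h5]; exact dvd_lin b1 b2 b3 _ _ _
    · rw [h6]; exact dvd_lin b1 b2 b3 _ _ _
  · rw [dvd_g]
    refine ⟨?_, ?_, ?_⟩
    · rw [h1]; exact dvd_lin a1 a2 a3 _ _ _
    · rw [h2]; exact dvd_lin a1 a2 a3 _ _ _
    · rw [h3]; exact dvd_lin a1 a2 a3 _ _ _

lemma gT (x : Tr) : g (T x) = g x := by
  apply g_eq <;> simp only [T, Equiv.coe_fn_mk]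
  · exact ⟨1, 0, 0, by ring⟩
  · exact ⟨4, 1, 0, by ring⟩
  · exact ⟨-2, -1, 1, by ring⟩
  · exact ⟨1, 0, 0, by ring⟩
  · exact ⟨-4, 1, 0, by ring⟩
  · exact ⟨-2, 1, 1, by ring⟩

lemma gU (x : Tr) : g (U x) = g x := by
  apply g_eq <;> simp only [U, Equiv.coe_fn_mk]
  · exact ⟨1, 1, -2, by ring⟩
  · exact ⟨0, 1, -4, by ring⟩
  · exact ⟨0, 0, 1, by ring⟩
  · exact ⟨1, -1, -2, by ring⟩
  · exact ⟨0, 1, 4, by ring⟩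
  · exact ⟨0, 0, 1, by ring⟩

lemma gR (x : Tr) : g (R x) = g x := by
  apply g_eq <;> simp only [R, Equiv.coe_fn_mk]
  · exact ⟨1, 1, -2, by ring⟩
  · exact ⟨-4, -3, 4, by ring⟩
  · exact ⟨-2, -1, 1, by ring⟩
  · exact ⟨1, 1, -2, by ring⟩
  · exact ⟨-4, -3, 4, by ring⟩
  · exact ⟨-2, -1, 1, by ring⟩

lemma gW (x : Tr) : g (W x) = g x := by
  apply g_eq <;> simp only [W, Equiv.coe_fn_mk]
  · exact ⟨0, 0, 1, by ring⟩
  · exact ⟨0, 1, 0, by ring⟩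
  · exact ⟨1, 0, 0, by ring⟩
  · exact ⟨0, 0, 1, by ring⟩
  · exact ⟨0, 1, 0, by ring⟩
  · exact ⟨1, 0, 0, by ring⟩

lemma gL (x : Tr) : g (L x) = g x := by
  apply g_eq <;> simp only [L, Equiv.coe_fn_mk]
  · exact ⟨1, 0, 0, by ring⟩
  · exact ⟨0, -1, 0, by ring⟩
  · exact ⟨0, 0, 1, by ring⟩
  · exact ⟨1, 0, 0, by ring⟩
  · exact ⟨0, -1, 0, by ring⟩
  · exact ⟨0, 0, 1, by ring⟩

lemma gN (x : Tr) : g (N x) = g x := by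
  apply g_eq <;> simp only [N, Equiv.coe_fn_mk]
  · exact ⟨-1, 0, 0, by ring⟩
  · exact ⟨0, -1, 0, by ring⟩
  · exact ⟨0, 0, -1, by ring⟩
  · exact ⟨-1, 0, 0, by ring⟩
  · exact ⟨0, -1, 0, by ring⟩
  · exact ⟨0, 0, -1, by ring⟩

/-- The discriminant. -/
def disc (x : Tr) : ℤ := x.2.1 ^ 2 + 8 * x.1 * x.2.2

/-- The invariant weight. -/
def K (D : ℕ) (x : Tr) : ℚ :=
  if disc x = D then ((ZMod.χ₄ (x.2.1 : ZMod 4) : ℤ) : ℚ) * ((Nat.totient (g x) : ℚ) / (g x : ℚ))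
  else 0

/-- The sign difference. -/
def δ (x : Tr) : ℚ := ((Int.sign x.1 + Int.sign x.2.2 : ℤ) : ℚ)

lemma four_zmod : (4 : ZMod 4) = 0 := by decide

lemma K_eq (D : ℕ) {x y : Tr} (h : disc y = disc x) (hg : g y = g x)
    (he : (y.2.1 : ZMod 4) = (x.2.1 : ZMod 4)) : K D y = K D x := by
  unfold K
  rw [h, hg, he]

lemma KT (D : ℕ) (x : Tr) : K D (T x) = K D x := by
  apply K_eq _ _ (gT x)
  · simp [T, four_zmod]
  · simp only [T, disc, Equiv.coe_fn_mk]; ring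

lemma KU (D : ℕ) (x : Tr) : K D (U x) = K D x := by
  apply K_eq _ _ (gU x)
  · simp [U, four_zmod]
  · simp only [U, disc, Equiv.coe_fn_mk]; ring

lemma KR (D : ℕ) (x : Tr) : K D (R x) = K D x := by
  apply K_eq _ _ (gR x)
  · have : (-3 : ZMod 4) = 1 := by decide
    simp [R, four_zmod]
    linear_combination (x.2.1 : ZMod 4) * this
  · simp only [R, disc, Equiv.coe_fn_mk]; ring

lemma KW (D : ℕ) (x : Tr) : K D (W x) = K D x := by
  apply K_eq _ _ (gW x)
  · simp [W]
  · simp only [W, disc, Equiv.coe_fn_mk]; ring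

lemma chi_neg (z : ZMod 4) : ZMod.χ₄ (-z) = - ZMod.χ₄ z := by
  revert z; decide

lemma KL (D : ℕ) (x : Tr) : K D (L x) = - K D x := by
  unfold K
  rw [gL]
  have : disc (L x) = disc x := by simp only [L, disc, Equiv.coe_fn_mk]; ring
  rw [this]
  split_ifs
  · have : ((L x).2.1 : ZMod 4) = -(x.2.1 : ZMod 4) := by simp [L]
    rw [this, chi_neg]; push_cast; ring
  · simp

lemma KN (D : ℕ) (x : Tr) : K D (N x) = - K D x := by
  unfold K
  rw [gN]
  have : disc (N x) = disc x := by simp only [N, disc, Equiv.coe_fn_mk]; ring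
  rw [this]
  split_ifs
  · have : ((N x).2.1 : ZMod 4) = -(x.2.1 : ZMod 4) := by simp [N]
    rw [this, chi_neg]; push_cast; ring
  · simp

lemma delta_rel (x : Tr) : δ x - δ (U x) + δ (R x) - δ (T x) = 0 := by
  simp only [δ, U, R, T, Equiv.coe_fn_mk]; push_cast; ring

/-- Supports are finite. -/
lemma supp_aux {D : ℕ} (hsq : ¬ IsSquare D) {x : Tr} (hK : K D x ≠ 0) (hd : δ x ≠ 0) :
    x.2.1 ^ 2 + 8 * x.1 * x.2.2 = D ∧ 0 < x.1 * x.2.2 := by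
  have h1 : disc x = D := by
    by_contra h
    exact hK (by simp [K, h])
  refine ⟨h1, ?_⟩
  have hne : x.1 * x.2.2 ≠ 0 := by
    intro h
    apply hsq
    unfold disc at h1
    have h2 : x.2.1 ^ 2 = D := by linarith
    refine ⟨x.2.1.natAbs, ?_⟩
    zify
    rw [← h2, ← sq, sq_abs]
  by_contra h
  have h3 : x.1 * x.2.2 < 0 := lt_of_le_of_ne (not_lt.1 h) hne
  apply hd
  unfold δ
  rcases mul_neg_iff.1 h3 with ⟨h4, h5⟩ | ⟨h4, h5⟩
  · rw [Int.sign_eq_one_of_pos h4, Int.sign_eq_neg_one_of_neg h5]; simp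
  · rw [Int.sign_eq_one_of_pos h5, Int.sign_eq_neg_one_of_neg h4]; simp

lemma box {D : ℕ} {a e d : ℤ} (h : e ^ 2 + 8 * a * d = D) (hp : 0 < a * d) :
    |a| ≤ D ∧ |e| ≤ D ∧ |d| ≤ D := by
  have ha : 1 ≤ |a| := Int.one_le_abs (by rintro rfl; simp at hp)
  have hd : 1 ≤ |d| := Int.one_le_abs (by rintro rfl; simp at hp)
  have h2 : a * d = |a| * |d| := by rw [← abs_mul, abs_of_pos hp]
  have h3 : e ^ 2 = |e| ^ 2 := (sq_abs e).symm
  have h4 := abs_nonneg e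
  have h5 : |e| ≤ |e| ^ 2 := by
    rcases h4.eq_or_lt with h | h
    · rw [← h]; norm_num
    · nlinarith
  refine ⟨?_, ?_, ?_⟩ <;> nlinarith

lemma fin_supp {D : ℕ} (hsq : ¬ IsSquare D) (w : Tr → ℚ) :
    (Function.support (fun x => K D x * δ x * w x)).Finite := by
  apply Set.Finite.subset (Set.finite_Icc ((-D, -D, -D) : Tr) ((D, D, D) : Tr))
  intro x hx
  have hx' : K D x * δ x * w x ≠ 0 := hx
  have hK : K D x ≠ 0 := by intro h; simp [h] at hx'
  have hd : δ x ≠ 0 := by intro h; simp [h] at hx'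
  obtain ⟨h1, h2⟩ := supp_aux hsq hK hd
  obtain ⟨h3, h4, h5⟩ := box h1 h2
  rw [abs_le] at h3 h4 h5
  exact ⟨⟨h3.1, h4.1, h5.1⟩, ⟨h3.2, h4.2, h5.2⟩⟩

lemma fin_supp_comp {D : ℕ} (hsq : ¬ IsSquare D) (w : Tr → ℚ) (σ : Tr ≃ Tr) :
    (Function.support (fun x => K D (σ x) * δ (σ x) * w (σ x))).Finite := by
  have := (fin_supp hsq w).preimage (f := σ) σ.injective.injOn
  exact this

lemma main_zero {D : ℕ} (hsq : ¬ IsSquare D) :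
    ∑ᶠ x : Tr, K D x * δ x * ((x.2.1 : ℚ) * x.1) = 0 := by
  set w1 : Tr → ℚ := fun x => (x.2.2 : ℚ) ^ 2 with hw1
  set w2 : Tr → ℚ := fun x => ((x.2.2 : ℚ) - x.2.1 - 2 * x.1) ^ 2 with hw2
  set w3 : Tr → ℚ := fun x => ((x.2.2 : ℚ) + x.2.1 - 2 * x.1) ^ 2 with hw3
  set w4 : Tr → ℚ := fun x => (x.2.1 : ℚ) * x.1 with hw4
  set w5 : Tr → ℚ := fun x => (x.2.1 : ℚ) * x.2.2 with hw5
  let Z : (Tr → ℚ) → ℚ := fun w => ∑ᶠ x : Tr, K D x * δ x * w x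
  have comp : ∀ (w : Tr → ℚ) (σ : Tr ≃ Tr),
      ∑ᶠ x : Tr, K D (σ x) * δ (σ x) * w (σ x) = Z w := fun w σ =>
    finsum_comp_equiv σ (f := fun x => K D x * δ x * w x)
  have hs := fin_supp (D := D) hsq
  have hsc := fin_supp_comp (D := D) hsq
  have e1 : Z w2 = Z w3 := by
    have hz : ∑ᶠ x : Tr, ((K D x * δ x * w1 x + K D (R x) * δ (R x) * w2 (R x))
        - (K D (U x) * δ (U x) * w1 (U x) + K D (T x) * δ (T x) * w3 (T x))) = 0 := by
      rw [← finsum_zero (α := Tr) (M := ℚ)]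
      congr 1
      ext x
      rw [KR, KU, KT]
      have a1 : w2 (R x) = w1 x := by
        simp only [hw1, hw2, R, Equiv.coe_fn_mk]; push_cast; ring
      have a2 : w3 (T x) = w1 x := by
        simp only [hw1, hw3, T, Equiv.coe_fn_mk]; push_cast; ring
      have a3 : w1 (U x) = w1 x := by
        simp only [hw1, U, Equiv.coe_fn_mk]
      rw [a1, a2, a3]
      linear_combination K D x * w1 x * delta_rel x
    rw [finsum_sub_distrib, finsum_add_distrib (hs w1) (hsc w2 R),
      finsum_add_distrib (hsc w1 U) (hsc w3 T), comp, comp, comp] at hz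
    · change Z w1 + _ - _ = 0 at hz
      linarith
    · exact ((hs w1).union (hsc w2 R)).subset (Function.support_add _ _)
    · exact ((hsc w1 U).union (hsc w3 T)).subset (Function.support_add _ _)
  have e2 : Z w5 = Z w4 := by
    rw [← comp w4 W]
    apply finsum_congr
    intro x
    rw [KW]
    simp only [hw4, hw5, W, δ, Equiv.coe_fn_mk]; push_cast; ring
  have e3 : Z w2 - Z w3 = 8 * Z w4 - 4 * Z w5 := by
    simp only [Z]
    rw [mul_finsum, mul_finsum, ← finsum_sub_distrib (hs w2) (hs w3), ← finsum_sub_distrib]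
    · apply finsum_congr
      intro x
      simp only [hw2, hw3, hw4, hw5]; ring
    · exact (hs w4).subset (by intro x; simp)
    · exact (hs w5).subset (by intro x; simp)
  change Z w4 = 0
  linarith

/-- Positive part. -/
def f (D : ℕ) (x : Tr) : ℚ :=
  if 0 < x.1 ∧ 0 < x.2.1 ∧ 0 < x.2.2 then K D x * ((x.2.1 : ℚ) * x.1) else 0

lemma f_bound {D : ℕ} {x : Tr} (h : f D x ≠ 0) :
    (0 < x.1 ∧ 0 < x.2.1 ∧ 0 < x.2.2) ∧ x.2.1 ^ 2 + 8 * x.1 * x.2.2 = D := by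
  unfold f at h
  split_ifs at h with h1
  · refine ⟨h1, ?_⟩
    by_contra h2
    exact h (by simp [K, disc, h2])
  · simp at h

lemma f_supp (D : ℕ) : (Function.support (f D)).Finite := by
  apply Set.Finite.subset (Set.finite_Icc ((-D, -D, -D) : Tr) ((D, D, D) : Tr))
  intro x hx
  obtain ⟨⟨p1, p2, p3⟩, h1⟩ := f_bound hx
  obtain ⟨h3, h4, h5⟩ := box h1 (mul_pos p1 p3)
  rw [abs_le] at h3 h4 h5
  exact ⟨⟨h3.1, h4.1, h5.1⟩, ⟨h3.2, h4.2, h5.2⟩⟩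

lemma f_decomp {D : ℕ} (hsq : ¬ IsSquare D) (x : Tr) :
    K D x * δ x * ((x.2.1 : ℚ) * x.1) =
      2 * ((f D x + f D (L x)) + (f D (N x) + f D (N (L x)))) := by
  have f1 : f D x = if 0 < x.1 ∧ 0 < x.2.1 ∧ 0 < x.2.2 then
    K D x * ((x.2.1 : ℚ) * x.1) else 0 := rfl
  have f2 : f D (L x) = if 0 < x.1 ∧ 0 < -x.2.1 ∧ 0 < x.2.2 then
    K D (L x) * (((-x.2.1 : ℤ) : ℚ) * x.1) else 0 := rfl
  have f3 : f D (N x) = if 0 < -x.1 ∧ 0 < -x.2.1 ∧ 0 < -x.2.2 then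
    K D (N x) * (((-x.2.1 : ℤ) : ℚ) * ((-x.1 : ℤ) : ℚ)) else 0 := rfl
  have f4 : f D (N (L x)) = if 0 < -x.1 ∧ 0 < - -x.2.1 ∧ 0 < -x.2.2 then
    K D (N (L x)) * (((- -x.2.1 : ℤ) : ℚ) * ((-x.1 : ℤ) : ℚ)) else 0 := rfl
  rw [f1, f2, f3, f4, KN, KN, KL]
  by_cases hK : K D x = 0
  · simp [hK]
  by_cases hd : δ x = 0
  · have hs : x.1.sign + x.2.2.sign = 0 := by unfold δ at hd; exact_mod_cast hd
    have n1 : ¬ (0 < x.1 ∧ 0 < x.2.2) := by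
      rintro ⟨h1, h2⟩
      rw [Int.sign_eq_one_of_pos h1, Int.sign_eq_one_of_pos h2] at hs; omega
    have n2 : ¬ (x.1 < 0 ∧ x.2.2 < 0) := by
      rintro ⟨h1, h2⟩
      rw [Int.sign_eq_neg_one_of_neg h1, Int.sign_eq_neg_one_of_neg h2] at hs; omega
    rw [hd, if_neg (by omega), if_neg (by omega), if_neg (by omega), if_neg (by omega)]
    simp
  obtain ⟨_, hp⟩ := supp_aux hsq hK hd
  rcases mul_pos_iff.1 hp with ⟨h4, h5⟩ | ⟨h4, h5⟩
  · have : δ x = 2 := by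
      unfold δ; rw [Int.sign_eq_one_of_pos h4, Int.sign_eq_one_of_pos h5]; norm_num
    rw [this]
    rcases lt_trichotomy x.2.1 0 with h | h | h
    · rw [if_neg (by omega), if_pos (by omega), if_neg (by omega), if_neg (by omega)]
      push_cast; ring
    · rw [if_neg (by omega), if_neg (by omega), if_neg (by omega), if_neg (by omega)]
      simp [h]
    · rw [if_pos (by omega), if_neg (by omega), if_neg (by omega), if_neg (by omega)]
      push_cast; ring
  · have : δ x = -2 := by
      unfold δ; rw [Int.sign_eq_neg_one_of_neg h4, Int.sign_eq_neg_one_of_neg h5]; norm_num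
    rw [this]
    rcases lt_trichotomy x.2.1 0 with h | h | h
    · rw [if_neg (by omega), if_neg (by omega), if_pos (by omega), if_neg (by omega)]
      push_cast; ring
    · rw [if_neg (by omega), if_neg (by omega), if_neg (by omega), if_neg (by omega)]
      simp [h]
    · rw [if_neg (by omega), if_neg (by omega), if_neg (by omega), if_pos (by omega)]
      push_cast; ring

lemma f_zero {D : ℕ} (hsq : ¬ IsSquare D) : ∑ᶠ x : Tr, f D x = 0 := by
  have h := main_zero hsq
  have hs := f_supp D
  have hc : ∀ σ : Tr ≃ Tr, (Function.support (fun x => f D (σ x))).Finite := fun σ =>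
    hs.preimage (f := σ) σ.injective.injOn
  have h0 : (Function.support (fun x => f D x)).Finite := hs
  have hNL : (Function.support (fun x => f D (N (L x)))).Finite := hc (L.trans N)
  rw [finsum_congr (f_decomp hsq), ← mul_finsum, finsum_add_distrib,
    finsum_add_distrib h0 (hc L), finsum_add_distrib (hc N) hNL,
    finsum_comp_equiv L, finsum_comp_equiv N] at h
  · have h2 : ∑ᶠ x : Tr, f D (N (L x)) = ∑ᶠ x : Tr, f D x :=
      finsum_comp_equiv (L.trans N) (f := f D)
    rw [h2] at h
    linarith
  · exact (h0.union (hc L)).subset (Function.support_add _ _)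
  · exact ((hc N).union hNL).subset (Function.support_add _ _)

lemma count_coprime (m k : ℕ) :
    ((Finset.range (m * k)).filter (fun b => Nat.gcd m b = 1)).card = k * Nat.totient m := by
  induction k with
  | zero => simp
  | succ k ih =>
    have h := Nat.filter_coprime_Ico_eq_totient m (m * k)
    have h2 : Finset.range (m * (k + 1)) = Finset.range (m * k) ∪ Finset.Ico (m * k) (m * k + m) := by
      ext b; simp only [Finset.mem_range, Finset.mem_union, Finset.mem_Ico, mul_add]; omega
    rw [h2, Finset.filter_union, Finset.card_union_of_disjoint, ih]
    · have : ((Finset.Ico (m * k) (m * k + m)).filter (fun b => Nat.gcd m b = 1)).card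
        = Nat.totient m := h
      rw [this]; ring
    · apply Finset.disjoint_filter_filter
      rw [Finset.disjoint_left]
      intro b hb hb2
      simp only [Finset.mem_range, Finset.mem_Ico] at hb hb2
      omega


lemma inner_count {D : ℕ} {a e d : ℤ} (ha : 1 ≤ a) (haD : a ≤ D) :
    (((Finset.Icc (0 : ℤ) D).filter (fun b => b < a ∧
      Int.gcd a (Int.gcd b (Int.gcd d e)) = 1)).card : ℚ) =
      (a : ℚ) * ((Nat.totient (g (a, e, d)) : ℚ) / (g (a, e, d) : ℚ)) := by
  set m := g (a, e, d) with hm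
  have hma : (m : ℤ) ∣ a := (g_dvd (a, e, d)).1
  lift a to ℕ using by omega
  obtain ⟨k, hk⟩ := Int.natCast_dvd_natCast.1 hma
  have key : ∀ b : ℕ, Int.gcd (a : ℤ) (Int.gcd (b : ℤ) (Int.gcd d e)) = Nat.gcd m b := by
    intro b
    rw [hm]
    simp only [g, Int.gcd_natCast_natCast]
    rw [Nat.gcd_assoc, Nat.gcd_comm b]
  have hc : ((Finset.Icc (0 : ℤ) D).filter (fun b : ℤ => b < (a : ℤ) ∧
      Int.gcd a (Int.gcd b (Int.gcd d e)) = 1)).card =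
      ((Finset.range (m * k)).filter (fun b => Nat.gcd m b = 1)).card := by
    symm
    apply Finset.card_nbij (fun b : ℕ => (b : ℤ))
    · intro b hb
      simp only [Finset.coe_filter, Finset.mem_filter, Finset.mem_range, Set.mem_setOf_eq, Finset.mem_Icc] at hb ⊢
      rw [key, ← hk] at *
      exact ⟨by omega, by omega, hb.2⟩
    · intro b _ c _ h
      exact Int.ofNat.inj h
    · intro b hb
      simp only [Finset.coe_filter, Set.mem_setOf_eq, Finset.mem_Icc] at hb
      obtain ⟨⟨h1, h2⟩, h3, h4⟩ := hb
      lift b to ℕ using h1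
      rw [key] at h4
      refine ⟨b, ?_, rfl⟩
      simp only [Finset.coe_filter, Set.mem_setOf_eq, Finset.mem_range]
      exact ⟨by rw [← hk]; omega, h4⟩
  rw [hc, count_coprime]
  have hm0 : (m : ℚ) ≠ 0 := by
    intro h
    have : m = 0 := by exact_mod_cast h
    rw [this] at hk; omega
  rw [hk]
  push_cast
  field_simp

lemma mD_eq {D e : ℕ} (hmod : D % 8 = 1) (he : Odd e) (hlt : e ^ 2 < D) :
    (mD D e : ℚ) = ∑ a ∈ Finset.Icc (1 : ℤ) D, ∑ d ∈ Finset.Icc (1 : ℤ) D,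
      if disc (a, (e : ℤ), d) = D then
        (a : ℚ) * ((Nat.totient (g (a, (e : ℤ), d)) : ℚ) / (g (a, (e : ℤ), d) : ℚ)) else 0 := by
  have hd8 : (8 : ℤ) ∣ (D : ℤ) - (e : ℤ) ^ 2 := by
    obtain ⟨c, hc⟩ := he
    obtain ⟨r, hr⟩ := Nat.even_mul_succ_self c
    refine ⟨(D / 8 : ℕ) - r, ?_⟩
    have h1 : (D : ℤ) = 8 * (D / 8 : ℕ) + 1 := by omega
    have h2 : (c : ℤ) * (c + 1) = r + r := by exact_mod_cast hr
    rw [hc]; push_cast at h1 ⊢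
    linear_combination h1 - 4 * h2
  have heq : ∀ a d : ℤ, a * d = ((D : ℤ) - (e : ℤ) ^ 2) / 8 ↔ disc (a, (e : ℤ), d) = D := by
    intro a d
    obtain ⟨q, hq⟩ := hd8
    simp only [disc]
    rw [hq, Int.mul_ediv_cancel_left _ (by norm_num)]
    constructor
    · intro h; rw [mul_assoc, h]; linarith
    · intro h; linarith
  have hset : {p : ℤ × ℤ × ℤ | 0 < p.1 ∧ 0 < p.2.2 ∧ 0 ≤ p.2.1 ∧ p.2.1 < p.1 ∧
    p.1 * p.2.2 = ((D : ℤ) - (e : ℤ) ^ 2) / 8 ∧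
    Int.gcd p.1 (Int.gcd p.2.1 (Int.gcd p.2.2 (e : ℤ))) = 1} =
    (((Finset.Icc (1 : ℤ) D ×ˢ Finset.Icc (0 : ℤ) D ×ˢ Finset.Icc (1 : ℤ) D).filter
      (fun p => disc (p.1, (e : ℤ), p.2.2) = D ∧ (p.2.1 < p.1 ∧
        Int.gcd p.1 (Int.gcd p.2.1 (Int.gcd p.2.2 (e : ℤ))) = 1)) : Finset (ℤ × ℤ × ℤ)) :
        Set (ℤ × ℤ × ℤ)) := by
    ext ⟨a, b, d⟩
    simp only [Set.mem_setOf_eq, Finset.coe_filter, Finset.mem_product, Finset.mem_Icc]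
    rw [heq]
    constructor
    · rintro ⟨h1, h2, h3, h4, h5, h6⟩
      obtain ⟨k1, k2, k3⟩ := box (show (e : ℤ) ^ 2 + 8 * a * d = D from h5) (mul_pos h1 h2)
      rw [abs_le] at k1 k3
      exact ⟨⟨⟨by omega, by omega⟩, ⟨by omega, by omega⟩, ⟨by omega, by omega⟩⟩, h5, h4, h6⟩
    · rintro ⟨⟨⟨h1, h2⟩, ⟨h3, h4⟩, ⟨h5, h6⟩⟩, h7, h8, h9⟩
      exact ⟨by omega, by omega, h3, h8, h7, h9⟩
  unfold mD
  rw [hset, Set.ncard_coe_finset, Finset.card_filter, Finset.sum_product]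
  push_cast
  apply Finset.sum_congr rfl
  intro a ha
  rw [Finset.mem_Icc] at ha
  rw [Finset.sum_product_right]
  apply Finset.sum_congr rfl
  intro d _
  by_cases h : disc (a, (e : ℤ), d) = D
  · simp only [h, true_and, if_true]
    rw [← inner_count ha.1 ha.2, Finset.card_filter]
    push_cast
    rfl
  · simp [h]

lemma final (D : ℕ) (hmod : D % 8 = 1) (hsq : ¬ IsSquare D) :
    ∑ e ∈ (Finset.range D).filter (fun e => Odd e ∧ e ^ 2 < D),
      (-1 : ℚ) ^ ((e - 1) / 2) * (e : ℚ) * (mD D e : ℚ) = 0 := by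
  rw [← f_zero hsq]
  let I := (Finset.range D).filter (fun e => Odd e ∧ e ^ 2 < D)
  let c : ℕ ↪ ℤ := Nat.castEmbedding
  have hsub : Function.support (f D) ⊆
      ((Finset.Icc (1 : ℤ) D ×ˢ I.map c ×ˢ Finset.Icc (1 : ℤ) D : Finset Tr) : Set Tr) := by
    rintro ⟨a, e, d⟩ hx
    obtain ⟨⟨h1, h2, h3⟩, h4⟩ := f_bound hx
    simp only at h1 h2 h3 h4
    obtain ⟨k1, k2, k3⟩ := box h4 (mul_pos h1 h3)
    rw [abs_le] at k1 k2 k3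
    have hp := mul_pos h1 h3
    have hlt : e ^ 2 < D := by nlinarith
    lift e to ℕ using h2.le
    simp only [Finset.coe_product, Set.mem_prod, Finset.mem_coe, Finset.mem_Icc, Finset.mem_map, I,
      Finset.mem_filter, Finset.mem_range]
    refine ⟨⟨by omega, by omega⟩, ⟨e, ⟨?_, ?_, ?_⟩, rfl⟩, ⟨by omega, by omega⟩⟩
    · have : (e : ℤ) < D := by nlinarith
      exact_mod_cast this
    · by_contra ho
      rw [Nat.not_odd_iff_even] at ho
      obtain ⟨r, rfl⟩ := ho
      push_cast at h4
      have h5 : (D : ℤ) = 4 * (r * r + 2 * (a * d)) := by rw [← h4]; ring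
      generalize (r : ℤ) * r + 2 * (a * d) = t at h5
      omega
    · exact_mod_cast hlt
  rw [finsum_eq_sum_of_support_subset _ hsub, Finset.sum_product]
  simp_rw [Finset.sum_product]
  rw [Finset.sum_comm, Finset.sum_map]
  apply Finset.sum_congr rfl
  intro e he
  rw [Finset.mem_filter, Finset.mem_range] at he
  obtain ⟨_, ho, hlt⟩ := he
  rw [mD_eq hmod ho hlt, Finset.mul_sum]
  apply Finset.sum_congr rfl
  intro a ha
  rw [Finset.mul_sum]
  apply Finset.sum_congr rfl
  intro d hd
  rw [Finset.mem_Icc] at ha hd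
  have hpos := ho.pos
  change _ = f D (a, (e : ℤ), d)
  unfold f K
  have hcond : 0 < ((a, (e : ℤ), d) : Tr).1 ∧ 0 < ((a, (e : ℤ), d) : Tr).2.1 ∧
      0 < ((a, (e : ℤ), d) : Tr).2.2 := ⟨by simp only; omega, by simp only; omega, by simp only; omega⟩
  rw [if_pos hcond]
  by_cases h : disc (a, (e : ℤ), d) = D
  · rw [if_pos h, if_pos h]
    have hchi : ZMod.χ₄ (((e : ℤ) : ZMod 4)) = (-1) ^ ((e - 1) / 2) := by
      have h1 := ZMod.χ₄_eq_neg_one_pow (Nat.odd_iff.1 ho)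
      have h2 : (e - 1) / 2 = e / 2 := by have := Nat.odd_iff.1 ho; omega
      rw [h2, ← h1]; simp only [Int.cast_natCast]
    simp only
    rw [hchi]
    push_cast
    ring
  · rw [if_neg h, if_neg h]; simp

end SDproof

/-- For a positive non-square integer `D ≡ 1 (mod 8)`,
`S_D = ∑_{0 < e < √D, e odd} (-1)^((e-1)/2) · e · m_D(e) = 0`. -/
theorem SD_eq_zero (D : ℕ) (hD : 0 < D) (hmod : D % 8 = 1) (hsq : ¬ IsSquare D) :
    ∑ e ∈ (Finset.range D).filter (fun e => Odd e ∧ e ^ 2 < D),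
      (-1 : ℤ) ^ ((e - 1) / 2) * (e : ℤ) * (mD D e : ℤ) = 0 := by
  have h := SDproof.final D hmod hsq
  exact_mod_cast h
end
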